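/- Fix an integer t ≥ 1 and integers a_1,…,a_t ≥ 1 and b_1,…,b_t ≥ 1 with b_i ≥ a_i for all i. Set S = a_1 + ⋯ + a_t, p_i = a_1 + ⋯ + a_{i−1}, q_i = a_{i+1} + ⋯ + a_t + b_i, and let h(z) = Σ_{i=1}^{t} z^{p_i} · (1 + z + ⋯ + z^{a_i − 1}) · (1 + z + ⋯ + z^{q_i − 1}) ∈ ℤ[z], with coefficients h_k. Then: (i) h_k = k + 1 for all 0 ≤ k ≤ S − 1; (ii) h_S = S − #{ i : b_i = a_i }; and (iii) deg h = S + max_i b_i − 2. -/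

import Mathlib

open Polynomial Finset


lemma aux_sum (f : ℕ → ℤ) : ∀ (t : ℕ) (a : Fin t → ℕ),
    ∑ i, ∑ u ∈ Finset.range (a i), f ((∑ k ∈ Finset.Iio i, a k) + u)
      = ∑ w ∈ Finset.range (∑ i, a i), f w := by
  intro t
  induction t with
  | zero => intro a; simp
  | succ n ih =>
    intro a
    rw [Fin.sum_univ_castSucc, Fin.sum_univ_castSucc a, Finset.sum_range_add]
    have h1 : ∀ i : Fin n, ∑ k ∈ Finset.Iio i.castSucc, a k
        = ∑ k ∈ Finset.Iio i, a k.castSucc := by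
      intro i
      rw [← Fin.map_castSuccEmb_Iio, Finset.sum_map]; rfl
    have h2 : ∑ k ∈ Finset.Iio (Fin.last n), a k = ∑ k : Fin n, a k.castSucc := by
      rw [Fin.Iio_last_eq_map, Finset.sum_map]; rfl
    simp only [h1, h2]
    rw [ih (fun i => a i.castSucc)]

lemma aux_coeff (p a q n : ℕ) :
    ((X ^ p * (∑ k ∈ Finset.range a, X ^ k) * (∑ k ∈ Finset.range q, X ^ k) : ℤ[X])).coeff n
      = ∑ u ∈ Finset.range a, if p + u ≤ n ∧ n < p + u + q then (1 : ℤ) else 0 := by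
  rw [Finset.mul_sum (Finset.range a), Finset.sum_mul, Polynomial.finsetSum_coeff]
  refine Finset.sum_congr rfl fun u _ => ?_
  rw [← pow_add, Polynomial.coeff_X_pow_mul', Polynomial.finsetSum_coeff]
  simp only [Polynomial.coeff_X_pow, Finset.sum_ite_eq, Finset.mem_range]
  split_ifs <;> first | rfl | omega

lemma aux_split (t : ℕ) (a : Fin t → ℕ) (i : Fin t) :
    (∑ k ∈ Finset.Iio i, a k) + a i + (∑ k ∈ Finset.Ioi i, a k) = ∑ k, a k := by
  have h1 : (Finset.univ : Finset (Fin t)) = Finset.Iio i ∪ {i} ∪ Finset.Ioi i := by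
    ext x; simp; omega
  rw [h1, Finset.sum_union, Finset.sum_union, Finset.sum_singleton]
  · rw [Finset.disjoint_left]; intro x; simp only [Finset.mem_Iio, Finset.mem_singleton]; omega
  · rw [Finset.disjoint_left]; intro x; simp only [Finset.mem_union, Finset.mem_Iio, Finset.mem_Ioi, Finset.mem_singleton]; omega

/-- Properties of the h-vector `h(z) = ∑ᵢ z^(pᵢ) (1+⋯+z^(aᵢ-1)) (1+⋯+z^(qᵢ-1))`:
(i) `h_k = k + 1` for `0 ≤ k ≤ S - 1`;
(ii) `h_S = S - #{i : bᵢ = aᵢ}`;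
(iii) `deg h = S + maxᵢ bᵢ - 2`. -/
theorem stmt_5 (t : ℕ) (ht : 1 ≤ t) (a b : Fin t → ℕ)
    (ha : ∀ i, 1 ≤ a i) (hb : ∀ i, 1 ≤ b i)
    (hba : ∀ i, a i ≤ b i)
    (S : ℕ) (hS : S = ∑ i, a i)
    (p q : Fin t → ℕ)
    (hp : ∀ i, p i = ∑ k ∈ Finset.Iio i, a k)
    (hq : ∀ i, q i = (∑ k ∈ Finset.Ioi i, a k) + b i)
    (h : Polynomial ℤ)
    (hh : h = ∑ i, X ^ (p i) * (∑ k ∈ Finset.range (a i), X ^ k) *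
      (∑ k ∈ Finset.range (q i), X ^ k)) :
    (∀ k : ℕ, k ≤ S - 1 → h.coeff k = (k : ℤ) + 1) ∧
    h.coeff S = (S : ℤ) - ((Finset.univ.filter fun i => b i = a i).card : ℤ) ∧
    h.natDegree = S + Finset.univ.sup b - 2 := by
  have hsplit : ∀ i, p i + q i + a i = S + b i := by
    intro i
    have := aux_split t a i
    rw [hp, hq, hS]; omega
  have hpS : ∀ i, p i + a i ≤ S := by
    intro i
    have := aux_split t a i
    rw [hp, hS]; omega
  have hc : ∀ n, h.coeff n = ∑ i, ∑ u ∈ Finset.range (a i),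
      if p i + u ≤ n ∧ n < p i + u + q i then (1 : ℤ) else 0 := by
    intro n
    rw [hh, Polynomial.finsetSum_coeff]
    exact Finset.sum_congr rfl fun i _ => aux_coeff _ _ _ _
  have hre : ∀ f : ℕ → ℤ, ∑ i, ∑ u ∈ Finset.range (a i), f (p i + u)
      = ∑ w ∈ Finset.range S, f w := by
    intro f
    rw [hS, ← aux_sum f t a]
    simp only [hp]
  let i0 : Fin t := ⟨0, ht⟩
  have hS1 : 1 ≤ S := by have := hpS i0; have := ha i0; omega
  refine ⟨?_, ?_, ?_⟩
  · intro k hk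
    rw [hc]
    have : ∑ i, ∑ u ∈ Finset.range (a i),
        (if p i + u ≤ k ∧ k < p i + u + q i then (1 : ℤ) else 0)
        = ∑ i, ∑ u ∈ Finset.range (a i), (fun w => if w ≤ k then (1 : ℤ) else 0) (p i + u) := by
      refine Finset.sum_congr rfl fun i _ => Finset.sum_congr rfl fun u hu => ?_
      have := hsplit i
      have := hba i
      simp only
      congr 1
      apply propext
      constructor
      · exact fun h => h.1
      · intro h; exact ⟨h, by omega⟩
    rw [this, hre (fun w => if w ≤ k then (1 : ℤ) else 0), ← Finset.sum_filter]
    have h2 : (Finset.range S).filter (fun w => w ≤ k) = Finset.range (k + 1) := by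
      ext x; simp; omega
    rw [h2]; simp
  · rw [hc]
    have : ∀ i, ∑ u ∈ Finset.range (a i),
        (if p i + u ≤ S ∧ S < p i + u + q i then (1 : ℤ) else 0)
        = (a i : ℤ) - if b i = a i then 1 else 0 := by
      intro i
      have h1 := hsplit i
      have h2 := hba i
      have h3 := hpS i
      obtain ⟨m, hm⟩ : ∃ m, a i = m + 1 := ⟨a i - 1, by have := ha i; omega⟩
      rw [hm, Finset.sum_range_succ']
      rw [Finset.sum_congr rfl (g := fun _ => (1 : ℤ))]
      · simp only [Finset.sum_const, Finset.card_range]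
        split_ifs <;> first | omega | simp
      · intro u hu
        rw [Finset.mem_range] at hu
        rw [if_pos]; omega
    rw [Finset.sum_congr rfl fun i _ => this i, Finset.sum_sub_distrib, hS]
    simp
  · apply le_antisymm
    · rw [Polynomial.natDegree_le_iff_coeff_eq_zero]
      intro N hN
      rw [hc]
      refine Finset.sum_eq_zero fun i _ => Finset.sum_eq_zero fun u hu => ?_
      rw [Finset.mem_range] at hu
      have h1 := hsplit i
      have h2 : b i ≤ Finset.univ.sup b := Finset.le_sup (Finset.mem_univ i)
      rw [if_neg]; omega
    · obtain ⟨j, -, hj⟩ := Finset.exists_mem_eq_sup (Finset.univ : Finset (Fin t))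
        ⟨i0, Finset.mem_univ _⟩ b
      apply Polynomial.le_natDegree_of_ne_zero
      rw [hc]
      apply ne_of_gt
      have hnn : ∀ (n : ℕ) (i : Fin t) (u : ℕ),
          (0 : ℤ) ≤ if p i + u ≤ n ∧ n < p i + u + q i then (1 : ℤ) else 0 := by
        intro n i u; split_ifs <;> simp
      refine Finset.sum_pos' (fun i _ => Finset.sum_nonneg fun u _ => hnn _ i u)
        ⟨j, Finset.mem_univ _, ?_⟩
      have h1 := hsplit j
      have h2 := ha j
      have h3 := hpS j
      have h4 := hb j
      refine Finset.sum_pos' (fun u _ => hnn _ j u) ⟨a j - 1, Finset.mem_range.2 (by omega), ?_⟩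
      rw [if_pos]
      · exact one_pos
      · rw [hj]; omega
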